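/- For all x, y ∈ ℝ^d and μ ∈ {1,…,d}, the x-derivative of the path-ordered exponential satisfies ∂_{x^μ} Φ(x,y) + B_μ(x) Φ(x,y) = ∫_0^1 s (x−y)^ν Φ(x, z(s)) F_{νμ}(z(s)) Φ(z(s), y) ds, where z(s) = y + s(x−y). -/

import Mathlib

/-!
Write `z(s) = y + s(x - y)`, and regard the connection as a one-form `𝓑` with values in a normed
algebra, so that `P x y` solves `P' = -𝓑(z(s))(x - y) P`.

Uniqueness for this linear equation gives `P x y s = Φ(z(s), y)`, the composition law
`Φ(x, z(s)) Φ(z(s), y) = Φ(x, y)`, and, by reversing the segment, `Φ(x, y) Φ(y, x) = 1`. Hence all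
transports are invertible and `s ↦ Φ(x, z(s))` solves the adjoint equation.

Integrating the derivative of `Φ(x, z(s)) P x' y s` yields Duhamel's formula (`duhamel`)
`Φ(x', y) - Φ(x, y) = ∫ Φ(x, z(s)) (a_{x'}(s) - a_x(s)) P x' y s ds`, where `a_x` is the coefficient
of the equation. By Gronwall's inequality and compactness the integrand is `O(‖x' - x‖)` uniformly
in `s`. This gives first the continuity of `Φ(·, y)`, and then its differentiability, by dominated
convergence: `DΦ(v) = ∫ Φ(x, z(s)) (∂_v a_x)(s) Φ(z(s), y) ds` (`hasFDerivAt_endpoint`).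

Adding `𝓑(x)(v) Φ(x, y) = ∫ d/ds [Φ(x, z(s)) s 𝓑(z(s))(v) Φ(z(s), y)] ds` replaces
`∂_v a_x` by `s` times the curvature evaluated on `(x - y, v)`, which is `fderiv_endpoint`. Matrices
are finally identified with operators on Euclidean space, because their entrywise sup norm is not
submultiplicative.
-/

/- STATEMENT 2: derivative of the path-ordered exponential in its first
argument: `∂_{x^μ} Φ(x,y) + B_μ(x) Φ(x,y)
  = ∫_0^1 s (x−y)^ν Φ(x,z(s)) F_{νμ}(z(s)) Φ(z(s),y) ds`, `z(s) = y + s(x−y)`. -/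

attribute [local instance] Matrix.normedAddCommGroup Matrix.normedSpace

/-- Partial derivative in the `μ`-th coordinate direction. -/
noncomputable def pd {d m : ℕ} (μ : Fin d)
    (g : EuclideanSpace ℝ (Fin d) → Matrix (Fin m) (Fin m) ℂ) :
    EuclideanSpace ℝ (Fin d) → Matrix (Fin m) (Fin m) ℂ :=
  fun x => fderiv ℝ g x (EuclideanSpace.single μ 1)

/-- The field strength `F_{μν} = ∂_μ B_ν − ∂_ν B_μ + [B_μ, B_ν]`. -/
noncomputable def Fstr {d m : ℕ}
    (B : Fin d → EuclideanSpace ℝ (Fin d) → Matrix (Fin m) (Fin m) ℂ)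
    (μ ν : Fin d) : EuclideanSpace ℝ (Fin d) → Matrix (Fin m) (Fin m) ℂ :=
  fun x => pd μ (B ν) x - pd ν (B μ) x + (B μ x * B ν x - B ν x * B μ x)

/-! ### The transport equation -/

namespace Transport
open Set Filter Topology MeasureTheory

variable {E 𝔸 : Type*} [NormedAddCommGroup E] [NormedSpace ℝ E]
  [NormedRing 𝔸] [NormedAlgebra ℝ 𝔸]

/-- The coefficient `-𝓑(z(s))(x - y)`, `z(s) = y + s(x - y)`, of the transport equation along the
segment from `y` to `x`, for a connection encoded as a one-form `𝓑 : E → (E →L[ℝ] 𝔸)`. -/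
noncomputable def coef (𝓑 : E → E →L[ℝ] 𝔸) (x y : E) (s : ℝ) : 𝔸 := -(𝓑 (y + s • (x - y)) (x - y))

/-- `P x y` solves the transport equation on `[0, 1]` along the segment from `y` to `x`, with
`P x y 0 = 1`; the path-ordered exponential is `P x y 1`. -/
structure IsTransport (𝓑 : E → E →L[ℝ] 𝔸) (P : E → E → ℝ → 𝔸) : Prop where
  start : ∀ x y, P x y 0 = 1
  deriv : ∀ x y, ∀ s ∈ Icc (0 : ℝ) 1,
    HasDerivWithinAt (P x y) (coef 𝓑 x y s * P x y s) (Icc 0 1) s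

lemma continuous_coef {𝓑 : E → E →L[ℝ] 𝔸} (h𝓑 : ContDiff ℝ 1 𝓑) (x y : E) :
    Continuous (coef 𝓑 x y) := by
  have := h𝓑.continuous
  unfold coef
  fun_prop

/-- Uniqueness for the linear equation `f' = a f` on `[0, 1]`. -/
lemma eqOn_of_ode {a : ℝ → 𝔸} (ha : Continuous a) {f g : ℝ → 𝔸}
    (hf : ∀ s ∈ Icc (0 : ℝ) 1, HasDerivWithinAt f (a s * f s) (Icc 0 1) s)
    (hg : ∀ s ∈ Icc (0 : ℝ) 1, HasDerivWithinAt g (a s * g s) (Icc 0 1) s)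
    (h0 : f 0 = g 0) : EqOn f g (Icc 0 1) := by
  obtain ⟨K, hK⟩ := isCompact_Icc.exists_bound_of_continuousOn (s := Icc (0 : ℝ) 1)
    ha.continuousOn
  refine ODE_solution_unique_of_mem_Icc_right (v := fun t u => a t * u) (s := fun _ => univ)
    (K := K.toNNReal) ?_ (fun s hs => (hf s hs).continuousWithinAt) ?_ (fun _ _ => mem_univ _)
    (fun s hs => (hg s hs).continuousWithinAt) ?_ (fun _ _ => mem_univ _) h0
  · intro t ht
    refine LipschitzOnWith.of_dist_le_mul fun u _ v _ => ?_
    rw [dist_eq_norm, dist_eq_norm, ← mul_sub]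
    refine (norm_mul_le _ _).trans ?_
    gcongr
    exact (hK t (Ico_subset_Icc_self ht)).trans (Real.le_coe_toNNReal K)
  · exact fun t ht => (hf t (Ico_subset_Icc_self ht)).mono_of_mem_nhdsWithin
      (Icc_mem_nhdsGE_of_mem ht)
  · exact fun t ht => (hg t (Ico_subset_Icc_self ht)).mono_of_mem_nhdsWithin
      (Icc_mem_nhdsGE_of_mem ht)

/-! ### Composition and inversion of transports along a segment -/

section General

variable {𝓑 : E → E →L[ℝ] 𝔸} {P : E → E → ℝ → 𝔸} (h : IsTransport 𝓑 P) (h𝓑 : ContDiff ℝ 1 𝓑)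
include h h𝓑

/-- Transport up to time `s` is transport along the shorter segment ending at `z(s)`. -/
lemma apply_eq (x y : E) {s : ℝ} (hs : s ∈ Icc (0 : ℝ) 1) :
    P x y s = P (y + s • (x - y)) y 1 := by
  have key := eqOn_of_ode (continuous_coef h𝓑 (y + s • (x - y)) y)
    (f := fun t => P x y (t * s)) (g := P (y + s • (x - y)) y) ?_ (h.deriv _ _)
    (by simp [h.start])
  · simpa using key (right_mem_Icc.2 zero_le_one)
  · intro t ht
    have hm : MapsTo (fun t : ℝ => t * s) (Icc 0 1) (Icc 0 1) := fun t ht =>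
      ⟨mul_nonneg ht.1 hs.1, mul_le_one₀ ht.2 hs.1 hs.2⟩
    have := (h.deriv x y (t * s) (hm ht)).scomp t
      ((hasDerivAt_id t).mul_const s).hasDerivWithinAt hm
    refine this.congr_deriv ?_
    simp [coef, smul_smul, -map_sub]

/-- The transports along a segment and along the reversed segment are mutually inverse. -/
lemma mul_reverse (x y : E) : P x y 1 * P y x 1 = 1 := by
  have key := eqOn_of_ode (continuous_coef h𝓑 x y)
    (f := fun t => P x y t * P y x 1) (g := fun t => P y x (1 - t)) ?_ ?_
    (by simp [h.start])
  · simpa [h.start] using key (right_mem_Icc.2 zero_le_one)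
  · intro t ht
    refine ((h.deriv x y t ht).mul_const _).congr_deriv (by rw [mul_assoc])
  · intro t ht
    have hm : MapsTo (fun t : ℝ => 1 - t) (Icc 0 1) (Icc 0 1) := fun t ht =>
      ⟨by linarith [ht.2], by linarith [ht.1]⟩
    have := (h.deriv y x (1 - t) (hm ht)).scomp t
      ((hasDerivAt_id t).const_sub 1).hasDerivWithinAt hm
    refine this.congr_deriv ?_
    have e : x + (1 - t) • (y - x) = y + t • (x - y) := by module
    have e2 : y - x = -(x - y) := by abel
    simp only [coef, e]
    rw [e2]
    simp [-map_sub, -neg_sub]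

lemma isUnit_apply (x y : E) {s : ℝ} (hs : s ∈ Icc (0 : ℝ) 1) : IsUnit (P x y s) := by
  rw [apply_eq h h𝓑 x y hs]
  exact ⟨⟨_, _, mul_reverse h h𝓑 _ _, mul_reverse h h𝓑 _ _⟩, rfl⟩

lemma apply_self (y : E) : P y y 1 = 1 := by
  have := apply_eq h h𝓑 y y (left_mem_Icc.2 zero_le_one)
  rw [h.start] at this
  simpa using this.symm

/-- Composition law along a segment: transport from `z(s)` to `x` after transport from `y` to
`z(s)` is transport from `y` to `x`. -/
lemma mul_apply (x y : E) {s : ℝ} (hs : s ∈ Icc (0 : ℝ) 1) :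
    P x (y + s • (x - y)) 1 * P x y s = P x y 1 := by
  have key := eqOn_of_ode (continuous_coef h𝓑 x (y + s • (x - y)))
    (f := fun t => P x (y + s • (x - y)) t * P x y s) (g := fun t => P x y (s + t * (1 - s))) ?_ ?_
    (by simp [h.start])
  · simpa using key (right_mem_Icc.2 zero_le_one)
  · intro t ht
    refine ((h.deriv _ _ t ht).mul_const _).congr_deriv (by rw [mul_assoc])
  · intro t ht
    have hm : MapsTo (fun t : ℝ => s + t * (1 - s)) (Icc 0 1) (Icc 0 1) := fun t ht =>
      ⟨by nlinarith [ht.1, hs.1, hs.2], by nlinarith [ht.2, hs.1, hs.2]⟩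
    have := (h.deriv x y (s + t * (1 - s)) (hm ht)).scomp t
      (((hasDerivAt_id t).mul_const (1 - s)).const_add s).hasDerivWithinAt hm
    refine this.congr_deriv ?_
    have e : y + s • (x - y) + t • (x - (y + s • (x - y))) = y + (s + t * (1 - s)) • (x - y) := by
      module
    have e2 : x - (y + s • (x - y)) = (1 - s) • (x - y) := by module
    simp only [coef, e]
    rw [e2]
    simp [-map_sub, -neg_sub]

variable [CompleteSpace 𝔸]

/-- The transport from `z(s)` to the fixed endpoint `x` solves the adjoint equation in `s`. -/
lemma hasDerivWithinAt_left (x y : E) {s : ℝ} (hs : s ∈ Icc (0 : ℝ) 1) :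
    HasDerivWithinAt (fun s => P x (y + s • (x - y)) 1)
      (-(P x (y + s • (x - y)) 1 * coef 𝓑 x y s)) (Icc 0 1) s := by
  have hV : ∀ t ∈ Icc (0 : ℝ) 1,
      P x (y + t • (x - y)) 1 = P x y 1 * Ring.inverse (P x y t) := fun t ht => by
    rw [← mul_apply h h𝓑 x y ht, mul_assoc, Ring.mul_inverse_cancel _ (isUnit_apply h h𝓑 x y ht),
      mul_one]
  obtain ⟨u, hu⟩ := isUnit_apply h h𝓑 x y hs
  have h1 := hasFDerivAt_ringInverse (𝕜 := ℝ) u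
  rw [hu] at h1
  have h2 := ((h1.comp_hasDerivWithinAt s (h.deriv x y s hs)).const_mul (P x y 1)).congr hV
    (hV s hs)
  refine h2.congr_deriv ?_
  rw [hV s hs, ← hu, Ring.inverse_unit]
  simp [mul_assoc]

lemma continuousOn_left (x y : E) :
    ContinuousOn (fun s : ℝ => P x (y + s • (x - y)) 1) (Icc 0 1) :=
  fun _ hs => (hasDerivWithinAt_left h h𝓑 x y hs).continuousWithinAt

omit [CompleteSpace 𝔸] h𝓑 in
lemma continuousOn_apply (x y : E) : ContinuousOn (P x y) (Icc 0 1) :=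
  fun s hs => (h.deriv x y s hs).continuousWithinAt

/-! ### Duhamel's formula and uniform bounds -/

/-- Duhamel's formula comparing the transports to two endpoints `x'` and `x`. -/
lemma duhamel (x x' y : E) :
    P x' y 1 - P x y 1 = ∫ s in (0 : ℝ)..1,
      P x (y + s • (x - y)) 1 * (coef 𝓑 x' y s - coef 𝓑 x y s) * P x' y s := by
  have hV := continuousOn_left h h𝓑 x y
  have hP := continuousOn_apply h x' y
  have hc := continuous_coef h𝓑 x y
  have hc' := continuous_coef h𝓑 x' y
  rw [intervalIntegral.integral_eq_sub_of_hasDeriv_right_of_le (zero_le_one' ℝ)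
    (f := fun s => P x (y + s • (x - y)) 1 * P x' y s) (hV.mul hP)]
  · simp [h.start, apply_self h h𝓑]
  · intro s hs
    have hs' := Ioo_subset_Icc_self hs
    have := (hasDerivWithinAt_left h h𝓑 x y hs').mul (h.deriv x' y s hs')
    refine (this.congr_deriv ?_).mono_of_mem_nhdsWithin
      (mem_nhdsWithin_of_mem_nhds (Icc_mem_nhds hs.1 hs.2))
    noncomm_ring
  · apply ContinuousOn.intervalIntegrable
    rw [uIcc_of_le zero_le_one]
    exact (hV.mul (hc'.sub hc).continuousOn).mul hP

omit [CompleteSpace 𝔸] h in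
/-- The coefficient is bounded, and Lipschitz in the endpoint, uniformly near `x`. -/
lemma coef_bounds [FiniteDimensional ℝ E] (x y : E) : ∃ K : ℝ, 0 ≤ K ∧
    ∀ x' ∈ Metric.closedBall x 1, ∀ s ∈ Icc (0 : ℝ) 1,
      ‖coef 𝓑 x' y s‖ ≤ K ∧ ‖coef 𝓑 x' y s - coef 𝓑 x y s‖ ≤ K * ‖x' - x‖ := by
  have : ProperSpace E := FiniteDimensional.proper ℝ E
  have hA : ContDiff ℝ 1 (fun p : E × ℝ => coef 𝓑 p.1 y p.2) := by
    unfold coef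
    fun_prop
  have hS : IsCompact (Metric.closedBall x 1 ×ˢ Icc (0 : ℝ) 1) :=
    (isCompact_closedBall x 1).prod isCompact_Icc
  obtain ⟨K₁, hK₁⟩ := hS.exists_bound_of_continuousOn hA.continuous.continuousOn
  obtain ⟨K₂, hK₂⟩ := hS.exists_bound_of_continuousOn
    (hA.continuous_fderiv one_ne_zero).continuousOn
  have hx₀ := Metric.mem_closedBall_self (x := x) zero_le_one
  refine ⟨max K₁ K₂, ?_, fun x' hx' s hs => ⟨?_, ?_⟩⟩
  · exact (norm_nonneg _).trans
      ((hK₁ (x, 0) ⟨hx₀, left_mem_Icc.2 zero_le_one⟩).trans (le_max_left _ _))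
  · exact (hK₁ (x', s) ⟨hx', hs⟩).trans (le_max_left _ _)
  · have := Convex.norm_image_sub_le_of_norm_fderiv_le
      (fun p _ => hA.differentiable one_ne_zero p) hK₂
      ((convex_closedBall x 1).prod (convex_Icc (0 : ℝ) 1))
      (x := (x, s)) (y := (x', s)) ⟨hx₀, hs⟩ ⟨hx', hs⟩
    refine this.trans ?_
    have e : ‖((x', s) : E × ℝ) - (x, s)‖ = ‖x' - x‖ := by simp [Prod.norm_def]
    rw [e]
    gcongr
    exact le_max_right _ _

omit [CompleteSpace 𝔸] in
lemma norm_apply_bound [FiniteDimensional ℝ E] (x y : E) : ∃ C : ℝ, 0 ≤ C ∧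
    ∀ x' ∈ Metric.closedBall x 1, ∀ s ∈ Icc (0 : ℝ) 1, ‖P x' y s‖ ≤ C := by
  obtain ⟨K, hK0, hK⟩ := coef_bounds h𝓑 x y
  refine ⟨‖(1 : 𝔸)‖ * Real.exp K, by positivity, fun x' hx' s hs => ?_⟩
  have := norm_le_gronwallBound_of_norm_deriv_right_le (continuousOn_apply h x' y)
    (fun t ht => (h.deriv x' y t (Ico_subset_Icc_self ht)).mono_of_mem_nhdsWithin
      (Icc_mem_nhdsGE_of_mem ht)) (δ := ‖(1 : 𝔸)‖) (by rw [h.start]) (K := K) (ε := 0)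
    (fun t ht => by
      rw [add_zero]
      refine (norm_mul_le _ _).trans ?_
      gcongr
      exact (hK x' hx' t (Ico_subset_Icc_self ht)).1) s hs
  rw [gronwallBound_ε0, sub_zero] at this
  refine this.trans ?_
  gcongr
  exact mul_le_of_le_one_right hK0 hs.2

/-- The Duhamel integrand is `O(‖x' - x‖)`, uniformly in `s`. -/
lemma integrand_bound [FiniteDimensional ℝ E] (x y : E) : ∃ C : ℝ,
    ∀ x' ∈ Metric.closedBall x 1, ∀ s ∈ Icc (0 : ℝ) 1,
      ‖P x (y + s • (x - y)) 1 * (coef 𝓑 x' y s - coef 𝓑 x y s) * P x' y s‖ ≤ C * ‖x' - x‖ := by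
  obtain ⟨K, hK0, hK⟩ := coef_bounds h𝓑 x y
  obtain ⟨C, hC0, hC⟩ := norm_apply_bound h h𝓑 x y
  obtain ⟨M, hM⟩ := isCompact_Icc.exists_bound_of_continuousOn (continuousOn_left h h𝓑 x y)
  refine ⟨M * K * C, fun x' hx' s hs => ?_⟩
  have hM0 : 0 ≤ M := (norm_nonneg _).trans (hM s hs)
  calc _ ≤ ‖P x (y + s • (x - y)) 1‖ * ‖coef 𝓑 x' y s - coef 𝓑 x y s‖ * ‖P x' y s‖ :=
        norm_mul₃_le
    _ ≤ M * (K * ‖x' - x‖) * C := by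
        gcongr
        exacts [hM s hs, (hK x' hx' s hs).2, hC x' hx' s hs]
    _ = _ := by ring

lemma continuous_endpoint [FiniteDimensional ℝ E] (y : E) : Continuous (fun x => P x y 1) := by
  refine continuous_iff_continuousAt.2 fun x => ?_
  obtain ⟨C, hC⟩ := integrand_bound h h𝓑 x y
  refine tendsto_iff_norm_sub_tendsto_zero.2 ?_
  have hlim : Tendsto (fun x' => C * ‖x' - x‖) (𝓝 x) (𝓝 0) := by
    have : Continuous fun x' => C * ‖x' - x‖ := by fun_prop
    simpa using this.tendsto x
  refine squeeze_zero' (Eventually.of_forall fun _ => norm_nonneg _) ?_ hlim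
  filter_upwards [Metric.closedBall_mem_nhds x one_pos] with x' hx'
  rw [duhamel h h𝓑]
  simpa using intervalIntegral.norm_integral_le_of_norm_le_const (a := (0 : ℝ)) (b := 1)
    (C := C * ‖x' - x‖) fun s hs => hC x' hx' s (by
      rw [uIoc_of_le zero_le_one] at hs
      exact Ioc_subset_Icc_self hs)

/-! ### Differentiability in the endpoint -/

omit [CompleteSpace 𝔸] h h𝓑 in
/-- A product of a factor that is differentiable and vanishes at `x` with a factor that is merely
continuous at `x` is differentiable at `x`. -/
lemma _root_.HasFDerivAt.mul_continuousAt_of_eq_zero {f g : E → 𝔸} {f' : E →L[ℝ] 𝔸} {x : E}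
    (hf : HasFDerivAt f f' x) (hf0 : f x = 0) (hg : ContinuousAt g x) :
    HasFDerivAt (fun x' => f x' * g x') (((ContinuousLinearMap.mul ℝ 𝔸).flip (g x)).comp f') x := by
  have h1 := ((ContinuousLinearMap.mul ℝ 𝔸).flip (g x)).hasFDerivAt.comp x hf
  have h2 : HasFDerivAt (fun x' => f x' * (g x' - g x)) (0 : E →L[ℝ] 𝔸) x := by
    have hO : f =O[𝓝 x] fun x' => x' - x := by simpa [hf0] using hf.isBigO_sub
    have ho : (fun x' => g x' - g x) =o[𝓝 x] fun _ => (1 : ℝ) := by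
      rw [Asymptotics.isLittleO_one_iff]
      simpa using hg.sub_const (g x)
    rw [hasFDerivAt_iff_isLittleO]
    have := hO.norm_right.mul_isLittleO ho
    simpa [hf0] using this
  refine ((h1.add h2).congr_of_eventuallyEq (Eventually.of_forall fun x' => ?_)).congr_fderiv ?_
  · simp [mul_sub]
  · simp

/-- The derivative of `coef 𝓑 x y s` with respect to `x`. -/
noncomputable def coefD (𝓑 : E → E →L[ℝ] 𝔸) (x y : E) (s : ℝ) : E →L[ℝ] 𝔸 :=
  -(s • (fderiv ℝ 𝓑 (y + s • (x - y))).flip (x - y) + 𝓑 (y + s • (x - y)))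

omit [CompleteSpace 𝔸] h in
lemma hasFDerivAt_coef (x y : E) (s : ℝ) :
    HasFDerivAt (fun x' => coef 𝓑 x' y s) (coefD 𝓑 x y s) x := by
  have h0 : HasFDerivAt (fun x' : E => x' - y) (ContinuousLinearMap.id ℝ E) x :=
    (hasFDerivAt_id x).sub_const y
  have h1 := (h𝓑.differentiable one_ne_zero (y + s • (x - y))).hasFDerivAt.comp x
    ((h0.const_smul s).const_add y)
  refine (h1.clm_apply h0).neg.congr_fderiv ?_
  ext v
  simp [coefD, add_comm]

omit [CompleteSpace 𝔸] h in
lemma continuous_coefD (x y : E) : Continuous (coefD 𝓑 x y) := by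
  have h1 := h𝓑.continuous
  have h2 := h𝓑.continuous_fderiv one_ne_zero
  unfold coefD
  have hz : Continuous fun s : ℝ => y + s • (x - y) := by fun_prop
  have h3 : Continuous fun s : ℝ => (fderiv ℝ 𝓑 (y + s • (x - y))).flip (x - y) :=
    (ContinuousLinearMap.apply ℝ (E →L[ℝ] 𝔸) (x - y)).continuous.comp
      ((ContinuousLinearMap.flipₗᵢ ℝ E E 𝔸).continuous.comp (h2.comp hz))
  exact ((continuous_id.smul h3).add (h1.comp hz)).neg

/-- Differentiation under the integral sign in Duhamel's formula. As the integrand vanishes at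
`x' = x` and is `O(‖x' - x‖)`, only the continuity of `P x' y s` in `x'` is needed. -/
lemma hasFDerivAt_endpoint [FiniteDimensional ℝ E] (x y : E) :
    IntervalIntegrable (fun s => (ContinuousLinearMap.mulLeftRight ℝ 𝔸 (P x (y + s • (x - y)) 1)
        (P x y s)).comp (coefD 𝓑 x y s)) volume 0 1 ∧
    HasFDerivAt (fun x' => P x' y 1)
      (∫ s in (0 : ℝ)..1, (ContinuousLinearMap.mulLeftRight ℝ 𝔸 (P x (y + s • (x - y)) 1)
        (P x y s)).comp (coefD 𝓑 x y s)) x := by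
  obtain ⟨C, hC⟩ := integrand_bound h h𝓑 x y
  have hV := continuousOn_left h h𝓑 x y
  have hc := continuous_coef h𝓑 x y
  have hF : ∀ x', ContinuousOn (fun s => P x (y + s • (x - y)) 1 *
      (coef 𝓑 x' y s - coef 𝓑 x y s) * P x' y s) (Ioc 0 1) := fun x' =>
    ((hV.mul ((continuous_coef h𝓑 x' y).sub hc).continuousOn).mul
      (continuousOn_apply h x' y)).mono Ioc_subset_Icc_self
  have hD : ContinuousOn (fun s => (ContinuousLinearMap.mulLeftRight ℝ 𝔸
      (P x (y + s • (x - y)) 1) (P x y s)).comp (coefD 𝓑 x y s)) (Icc 0 1) := by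
    have h1 := continuousOn_apply h x y
    have h2 := (continuous_coefD h𝓑 x y).continuousOn (s := Icc 0 1)
    exact (((ContinuousLinearMap.mulLeftRight ℝ 𝔸).continuous.comp_continuousOn hV).clm_apply
      h1).clm_comp h2
  refine ⟨ContinuousOn.intervalIntegrable (by rwa [uIcc_of_le zero_le_one]), ?_⟩
  have key := (hasFDerivAt_integral_of_dominated_loc_of_lip' (𝕜 := ℝ)
    (μ := volume.restrict (Ioc (0 : ℝ) 1)) (bound := fun _ => C) (x₀ := x)
    (F := fun x' s => P x (y + s • (x - y)) 1 * (coef 𝓑 x' y s - coef 𝓑 x y s) * P x' y s)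
    (F' := fun s => (ContinuousLinearMap.mulLeftRight ℝ 𝔸 (P x (y + s • (x - y)) 1)
        (P x y s)).comp (coefD 𝓑 x y s))
    (Metric.closedBall_mem_nhds x one_pos)
    (fun x' _ => (hF x').aestronglyMeasurable measurableSet_Ioc) (by simp)
    ((hD.mono Ioc_subset_Icc_self).aestronglyMeasurable measurableSet_Ioc)
    ?_ (integrable_const C) ?_).2
  · refine (key.const_add (P x y 1)).congr_of_eventuallyEq
      (Eventually.of_forall fun x' => ?_) |>.congr_fderiv ?_
    · have := duhamel h h𝓑 x x' y
      rw [intervalIntegral.integral_of_le zero_le_one] at this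
      simp only [← this]
      abel
    · rw [intervalIntegral.integral_of_le zero_le_one]
  · refine (ae_restrict_iff' measurableSet_Ioc).2 (Eventually.of_forall fun s hs x' hx' => ?_)
    simpa using hC x' hx' s (Ioc_subset_Icc_self hs)
  · refine (ae_restrict_iff' measurableSet_Ioc).2 (Eventually.of_forall fun s hs => ?_)
    have hs' := Ioc_subset_Icc_self hs
    have hg : ContinuousAt (fun x' => P x' y s) x := by
      simp_rw [apply_eq h h𝓑 _ y hs']
      exact ((continuous_endpoint h h𝓑 y).comp
        (f := fun x' : E => y + s • (x' - y)) (by fun_prop)).continuousAt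
    have h1 := (((ContinuousLinearMap.mul ℝ 𝔸 (P x (y + s • (x - y)) 1)).hasFDerivAt.comp x
      ((hasFDerivAt_coef h𝓑 x y s).sub_const (coef 𝓑 x y s))).mul_continuousAt_of_eq_zero
        (by simp) hg)
    refine h1.congr_fderiv ?_
    ext v
    simp

/-! ### Curvature and the derivative formula -/

/-- The curvature two-form `d𝓑 + 𝓑 ∧ 𝓑` of the connection one-form `𝓑`. -/
noncomputable def curv (𝓑 : E → E →L[ℝ] 𝔸) (z u v : E) : 𝔸 :=
  fderiv ℝ 𝓑 z u v - fderiv ℝ 𝓑 z v u + (𝓑 z u * 𝓑 z v - 𝓑 z v * 𝓑 z u)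

/-- Coordinate-free form of the derivative formula. -/
theorem fderiv_endpoint [FiniteDimensional ℝ E] (x y v : E) :
    fderiv ℝ (fun x' => P x' y 1) x v + 𝓑 x v * P x y 1 =
      ∫ s in (0 : ℝ)..1, s • (P x (y + s • (x - y)) 1 * curv 𝓑 (y + s • (x - y)) (x - y) v *
        P (y + s • (x - y)) y 1) := by
  obtain ⟨hint, hd⟩ := hasFDerivAt_endpoint h h𝓑 x y
  have hV := continuousOn_left h h𝓑 x y
  have hP := continuousOn_apply h x y
  have hc := (continuous_coef h𝓑 x y).continuousOn (s := Icc 0 1)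
  have hcont𝓑 := h𝓑.continuous
  have hcontD := h𝓑.continuous_fderiv one_ne_zero
  rw [hd.fderiv, ContinuousLinearMap.intervalIntegral_apply hint]
  -- `∂_v` of the coefficient differs from the curvature by an exact term: the `s`-derivative of
  -- `Φ(x, z(s)) · s 𝓑(z(s)) v · Φ(z(s), y)`, which integrates to `𝓑(x) v · Φ(x, y)`.
  have hderiv : ∀ s ∈ Icc (0 : ℝ) 1, HasDerivWithinAt
      (fun s => P x (y + s • (x - y)) 1 * (s • 𝓑 (y + s • (x - y)) v) * P x y s)
      (P x (y + s • (x - y)) 1 * (-coef 𝓑 x y s * (s • 𝓑 (y + s • (x - y)) v) +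
        (s • fderiv ℝ 𝓑 (y + s • (x - y)) (x - y) v + 𝓑 (y + s • (x - y)) v) +
        (s • 𝓑 (y + s • (x - y)) v) * coef 𝓑 x y s) * P x y s) (Icc 0 1) s := by
    intro s hs
    have hz : HasDerivAt (fun s : ℝ => y + s • (x - y)) (x - y) s := by
      simpa using ((hasDerivAt_id s).smul_const (x - y)).const_add y
    have h0 : HasDerivAt (fun s : ℝ => 𝓑 (y + s • (x - y)))
        (fderiv ℝ 𝓑 (y + s • (x - y)) (x - y)) s :=
      (h𝓑.differentiable one_ne_zero (y + s • (x - y))).hasFDerivAt.comp_hasDerivAt s hz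
    have h1 : HasDerivAt (fun s : ℝ => 𝓑 (y + s • (x - y)) v)
        (fderiv ℝ 𝓑 (y + s • (x - y)) (x - y) v) s :=
      (ContinuousLinearMap.apply ℝ 𝔸 v).hasFDerivAt.comp_hasDerivAt s h0
    have h2 : HasDerivAt (fun s : ℝ => s • 𝓑 (y + s • (x - y)) v)
        (s • fderiv ℝ 𝓑 (y + s • (x - y)) (x - y) v + 𝓑 (y + s • (x - y)) v) s := by
      simpa using (hasDerivAt_id s).fun_smul h1
    refine (((hasDerivWithinAt_left h h𝓑 x y hs).fun_mul h2.hasDerivWithinAt).fun_mul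
      (h.deriv x y s hs)).congr_deriv ?_
    noncomm_ring
  have hcont : ContinuousOn (fun s => P x (y + s • (x - y)) 1 *
      (-coef 𝓑 x y s * (s • 𝓑 (y + s • (x - y)) v) +
        (s • fderiv ℝ 𝓑 (y + s • (x - y)) (x - y) v + 𝓑 (y + s • (x - y)) v) +
        (s • 𝓑 (y + s • (x - y)) v) * coef 𝓑 x y s) * P x y s) (Icc 0 1) := by
    have hB : ContinuousOn (fun s : ℝ => 𝓑 (y + s • (x - y)) v) (Icc 0 1) := by fun_prop
    have hB' : ContinuousOn (fun s : ℝ => fderiv ℝ 𝓑 (y + s • (x - y)) (x - y) v)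
      (Icc 0 1) := by fun_prop
    have hid : ContinuousOn (fun s : ℝ => s) (Icc 0 1) := continuousOn_id
    exact (hV.mul (((hc.neg.mul (hid.smul hB)).add ((hid.smul hB').add hB)).add
      ((hid.smul hB).mul hc))).mul hP
  have hint2 := hcont.intervalIntegrable_of_Icc (μ := volume) (zero_le_one' ℝ)
  have hFTC := intervalIntegral.integral_eq_sub_of_hasDeriv_right_of_le (zero_le_one' ℝ)
    (fun s hs => (hderiv s hs).continuousWithinAt)
    (fun s hs => (hderiv s (Ioo_subset_Icc_self hs)).mono_of_mem_nhdsWithin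
      (mem_nhdsWithin_of_mem_nhds (Icc_mem_nhds hs.1 hs.2))) hint2
  have hend : 𝓑 x v * P x y 1 = ∫ s in (0 : ℝ)..1, P x (y + s • (x - y)) 1 *
      (-coef 𝓑 x y s * (s • 𝓑 (y + s • (x - y)) v) +
        (s • fderiv ℝ 𝓑 (y + s • (x - y)) (x - y) v + 𝓑 (y + s • (x - y)) v) +
        (s • 𝓑 (y + s • (x - y)) v) * coef 𝓑 x y s) * P x y s := by
    rw [hFTC]
    simp [apply_self h h𝓑]
  have hint1 : IntervalIntegrable (fun s => ((ContinuousLinearMap.mulLeftRight ℝ 𝔸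
      (P x (y + s • (x - y)) 1) (P x y s)).comp (coefD 𝓑 x y s)) v) volume 0 1 :=
    ⟨(ContinuousLinearMap.apply ℝ 𝔸 v).integrable_comp hint.1,
      (ContinuousLinearMap.apply ℝ 𝔸 v).integrable_comp hint.2⟩
  rw [hend, ← intervalIntegral.integral_add hint1 hint2]
  refine intervalIntegral.integral_congr fun s hs => ?_
  rw [uIcc_of_le zero_le_one] at hs
  simp only [ContinuousLinearMap.comp_apply, ContinuousLinearMap.mulLeftRight_apply,
    ← apply_eq h h𝓑 x y hs]
  rw [← add_mul, ← mul_add, ← smul_mul_assoc, ← mul_smul_comm]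
  congr 2
  simp only [coefD, coef, curv, _root_.neg_apply, _root_.add_apply,
    _root_.smul_apply, ContinuousLinearMap.flip_apply, neg_neg, mul_neg,
    mul_smul_comm, smul_mul_assoc]
  module

end General

/-! ### Components and matrices -/

section Components

variable {M : Type*} [NormedAddCommGroup M] [NormedSpace ℝ M] [CompleteSpace 𝔸] {d : ℕ}

/-- The one-form `v ↦ ∑ ν, v^ν φ(B_ν(x))` with components `B`, transported along a map `φ` into the
normed algebra `𝔸`. -/
noncomputable def oneForm (φ : M ≃L[ℝ] 𝔸) (B : Fin d → EuclideanSpace ℝ (Fin d) → M)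
    (x : EuclideanSpace ℝ (Fin d)) : EuclideanSpace ℝ (Fin d) →L[ℝ] 𝔸 :=
  ∑ ν, (EuclideanSpace.proj ν : EuclideanSpace ℝ (Fin d) →L[ℝ] ℝ).smulRight (φ (B ν x))

variable {φ : M ≃L[ℝ] 𝔸} {B : Fin d → EuclideanSpace ℝ (Fin d) → M}

omit [CompleteSpace 𝔸] in
lemma oneForm_apply (x v : EuclideanSpace ℝ (Fin d)) :
    oneForm φ B x v = φ (∑ ν, v ν • B ν x) := by
  simp [oneForm, map_sum]

omit [CompleteSpace 𝔸] in
lemma contDiff_oneForm (hB : ∀ μ, ContDiff ℝ 1 (B μ)) : ContDiff ℝ 1 (oneForm φ B) := by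
  unfold oneForm
  refine ContDiff.sum fun ν _ => ?_
  have h1 : ContDiff ℝ 1 (fun x => φ (B ν x)) := φ.contDiff.comp (hB ν)
  exact ((ContinuousLinearMap.smulRightL ℝ (EuclideanSpace ℝ (Fin d)) 𝔸)
      (EuclideanSpace.proj ν)).contDiff.comp h1

omit [CompleteSpace 𝔸] in
lemma fderiv_oneForm (hB : ∀ μ, ContDiff ℝ 1 (B μ)) (z u v : EuclideanSpace ℝ (Fin d)) :
    fderiv ℝ (oneForm φ B) z u v = φ (∑ ν, v ν • fderiv ℝ (B ν) z u) := by
  have h1 : HasFDerivAt (fun z => oneForm φ B z v)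
      ((ContinuousLinearMap.apply ℝ 𝔸 v).comp (fderiv ℝ (oneForm φ B) z)) z :=
    (ContinuousLinearMap.apply ℝ 𝔸 v).hasFDerivAt.comp z
      ((contDiff_oneForm hB).differentiable one_ne_zero z).hasFDerivAt
  have h2 : HasFDerivAt (fun z => ∑ ν, v ν • B ν z) (∑ ν, v ν • fderiv ℝ (B ν) z) z :=
    HasFDerivAt.fun_sum fun ν _ =>
      (((hB ν).differentiable one_ne_zero) z).hasFDerivAt.const_smul (v ν)
  have h3 : HasFDerivAt (fun z => oneForm φ B z v)
      (φ.toContinuousLinearMap.comp (∑ ν, v ν • fderiv ℝ (B ν) z)) z := by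
    simp_rw [oneForm_apply]
    exact φ.toContinuousLinearMap.hasFDerivAt.comp z h2
  have := congrArg (fun L => L u) (h1.unique h3)
  simpa using this

omit [CompleteSpace 𝔸] in
/-- The curvature of the one-form, evaluated on `u` and a coordinate vector, contracts the field
strength with `u`. -/
lemma curv_oneForm {mul : M → M → M} (hmul : ∀ a b, φ (mul a b) = φ a * φ b)
    (hB : ∀ μ, ContDiff ℝ 1 (B μ)) (z u : EuclideanSpace ℝ (Fin d)) (μ : Fin d) :
    curv (oneForm φ B) z u (EuclideanSpace.single μ 1) =
      φ (∑ ν, u ν • (fderiv ℝ (B μ) z (EuclideanSpace.single ν 1)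
        - fderiv ℝ (B ν) z (EuclideanSpace.single μ 1)
        + (mul (B ν z) (B μ z) - mul (B μ z) (B ν z)))) := by
  have hu : u = ∑ ν, u ν • EuclideanSpace.single ν (1 : ℝ) := by
    simpa using ((EuclideanSpace.basisFun (Fin d) ℝ).sum_repr u).symm
  have h1 : fderiv ℝ (B μ) z u = ∑ ν, u ν • fderiv ℝ (B μ) z (EuclideanSpace.single ν 1) := by
    conv_lhs => rw [hu]
    simp only [map_sum, map_smul]
  have hs : ∀ f : Fin d → M,
      ∑ ν, (EuclideanSpace.single μ (1 : ℝ)) ν • f ν = f μ := fun f => by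
    simp [PiLp.single_apply, ite_smul]
  rw [curv, fderiv_oneForm hB, fderiv_oneForm hB, oneForm_apply, oneForm_apply, hs, hs, h1]
  simp only [map_sum, map_smul, map_add, map_sub, hmul, smul_add, smul_sub,
    Finset.sum_add_distrib, Finset.sum_sub_distrib,
    Finset.sum_mul, Finset.mul_sum, smul_mul_assoc, mul_smul_comm]

/-- Component form of `fderiv_endpoint`, for coefficients in a finite-dimensional normed space `M`
whose product `mul` is identified by `φ` with that of a normed algebra. The product is kept separate
from the norm on `M`, which need not be submultiplicative. -/
theorem fderiv_endpoint_components [FiniteDimensional ℝ M] (φ₀ : M ≃ₗ[ℝ] 𝔸) (mul : M → M → M)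
    (one : M) (hmul : ∀ a b, φ₀ (mul a b) = φ₀ a * φ₀ b) (hone : φ₀ one = 1)
    (hB : ∀ μ, ContDiff ℝ 1 (B μ))
    (P : EuclideanSpace ℝ (Fin d) → EuclideanSpace ℝ (Fin d) → ℝ → M)
    (hP0 : ∀ x y, P x y 0 = one)
    (hP : ∀ x y, ∀ s ∈ Icc (0 : ℝ) 1, HasDerivWithinAt (P x y)
      (mul (-(∑ μ, (x μ - y μ) • B μ (y + s • (x - y)))) (P x y s)) (Icc (0 : ℝ) 1) s)
    (Φ : EuclideanSpace ℝ (Fin d) → EuclideanSpace ℝ (Fin d) → M) (hΦ : ∀ x y, Φ x y = P x y 1)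
    (x y : EuclideanSpace ℝ (Fin d)) (μ : Fin d) :
    fderiv ℝ (fun x' => Φ x' y) x (EuclideanSpace.single μ 1) + mul (B μ x) (Φ x y)
      = ∫ s in (0 : ℝ)..1, s • ∑ ν, (x ν - y ν) •
          mul (mul (Φ x (y + s • (x - y)))
            (fderiv ℝ (B μ) (y + s • (x - y)) (EuclideanSpace.single ν 1)
              - fderiv ℝ (B ν) (y + s • (x - y)) (EuclideanSpace.single μ 1)
              + (mul (B ν (y + s • (x - y))) (B μ (y + s • (x - y)))
                - mul (B μ (y + s • (x - y))) (B ν (y + s • (x - y))))))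
            (Φ (y + s • (x - y)) y) := by
  have : FiniteDimensional ℝ 𝔸 := φ₀.finiteDimensional
  have : CompleteSpace M := FiniteDimensional.complete ℝ M
  obtain ⟨φ, hφ⟩ : ∃ φ : M ≃L[ℝ] 𝔸, ∀ a, φ a = φ₀ a := ⟨φ₀.toContinuousLinearEquiv, fun _ => rfl⟩
  simp only [← hφ] at hmul hone
  have h : IsTransport (oneForm φ B) fun x y s => φ (P x y s) := by
    refine ⟨fun x y => by rw [hP0, hone], fun x y s hs => ?_⟩
    refine (φ.toContinuousLinearMap.hasFDerivAt.comp_hasDerivWithinAt s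
      (hP x y s hs)).congr_deriv ?_
    simp only [ContinuousLinearEquiv.coe_coe]
    rw [hmul, map_neg, coef, oneForm_apply]
    simp
  have key := fderiv_endpoint h (contDiff_oneForm hB) x y (EuclideanSpace.single μ 1)
  have h1 : fderiv ℝ (fun x' => φ (Φ x' y)) x =
      φ.toContinuousLinearMap.comp (fderiv ℝ (fun x' => Φ x' y) x) := φ.comp_fderiv
  have hs : ∑ ν, (EuclideanSpace.single μ (1 : ℝ)) ν • B ν x = B μ x := by
    simp [PiLp.single_apply, ite_smul]
  simp only [← hΦ, curv_oneForm hmul hB, oneForm_apply, ← hmul, hs, ← map_smul, h1] at key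
  apply φ.injective
  have hI : ∀ f : ℝ → M, φ (∫ s in (0 : ℝ)..1, f s) = ∫ s in (0 : ℝ)..1, φ (f s) := fun f => by
    rw [intervalIntegral.integral_of_le zero_le_one, intervalIntegral.integral_of_le zero_le_one,
      φ.integral_comp_comm]
  rw [hI, map_add]
  refine key.trans (intervalIntegral.integral_congr fun s _ => ?_)
  simp [hmul, Finset.mul_sum, Finset.sum_mul, mul_assoc, -smul_add]

end Components

end Transport

theorem deriv_pathOrderedExp_fst
    (d m : ℕ) (hd : 0 < d) (hm : 0 < m)
    (B : Fin d → EuclideanSpace ℝ (Fin d) → Matrix (Fin m) (Fin m) ℂ)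
    (hB : ∀ μ, ContDiff ℝ (⊤ : ℕ∞) (B μ))
    (P : EuclideanSpace ℝ (Fin d) → EuclideanSpace ℝ (Fin d) → ℝ →
      Matrix (Fin m) (Fin m) ℂ)
    (hP0 : ∀ x y, P x y 0 = 1)
    (hP : ∀ x y, ∀ s ∈ Set.Icc (0:ℝ) 1, HasDerivWithinAt (P x y)
      (-(∑ μ, (x μ - y μ) • B μ (y + s • (x - y))) * P x y s) (Set.Icc (0:ℝ) 1) s)
    (Φ : EuclideanSpace ℝ (Fin d) → EuclideanSpace ℝ (Fin d) →
      Matrix (Fin m) (Fin m) ℂ)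
    (hΦ : ∀ x y, Φ x y = P x y 1)
    (x y : EuclideanSpace ℝ (Fin d)) (μ : Fin d) :
    fderiv ℝ (fun x' => Φ x' y) x (EuclideanSpace.single μ 1) + B μ x * Φ x y
      = ∫ s in (0:ℝ)..1, s • ∑ ν, (x ν - y ν) •
          (Φ x (y + s • (x - y)) * Fstr B ν μ (y + s • (x - y)) *
            Φ (y + s • (x - y)) y) := by
  exact Transport.fderiv_endpoint_components
    ((Matrix.toEuclideanCLM (n := Fin m) (𝕜 := ℂ)).toAlgEquiv.toLinearEquiv.restrictScalars ℝ)
    (fun a b => a * b) 1 (map_mul (Matrix.toEuclideanCLM (n := Fin m) (𝕜 := ℂ)))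
    (map_one (Matrix.toEuclideanCLM (n := Fin m) (𝕜 := ℂ)))
    (fun ν => (hB ν).of_le (by exact_mod_cast le_top)) P hP0 hP Φ hΦ x y μ
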